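/- Let n ≥ 2, let G = (V, E) be a finite simple graph with E nonempty, and let ℓ : E → ℝ satisfy ℓ(e) > 0 for every edge e. Then (G, ℓ) is completable in (𝕂ⁿ, d_K) if and only if there exists a symmetric real matrix D indexed by V with nonnegative entries such that: (C1) D u u = 0 for all u ∈ V; (C2) D u v = ℓ({u,v})² whenever {u,v} ∈ E; (C3) the rank of D is at most n + 1; and (C4) D has exactly one positive eigenvalue (counted with multiplicity). -/

import Mathlib

/-!
Send a sphere `(φ, t)` to the vector `(1, ‖t‖², t) / φ` and a plane `h` to `(0, h, 0)`. These lie on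
the light cone `a * b = ‖w‖²` of `ℝ × ℝ × ℝ^{n-1}` with the Lorentzian form
`a * b' + b * a' - 2 * ⟪w, w'⟫`, and `dK` squared is exactly this form (`dK_sq`). The matrix of
squared distances is therefore a Gram matrix of a form of signature `(1, n)`: its rank is at most
`n + 1` and it is nonpositive on a hyperplane, hence has at most one positive eigenvalue; it has one
because it is nonzero with trace zero.

Conversely, the spectral decomposition of `D` writes `D u v = p u * p v - s u * s v - ⟪w u, w v⟫`
(`exists_lorentz_gram`), and the zero diagonal puts every `(p u, s u, w u)` on the light cone. A
light-like vector with `p > 0` comes from a kissing sphere (`exists_kSphere`). On an edge `D` is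
positive, which forces `p u` and `p v` to be nonzero with the same sign, so each vector with `p u < 0`
may be replaced by its opposite without changing the form on edges; vertices with `p u = 0` are
isolated and can be placed anywhere.
-/


/-- A kissing sphere in `ℝⁿ`: either a sphere of diameter `φ > 0` in the half-space
`x₀ ≥ 0` tangent to the hyperplane `x₀ = 0` at `t ∈ ℝ^{n−1}`, or the hyperplane
`x₀ = h` for some `h > 0`. -/
inductive KSphere (n : ℕ) where
  | sphere (φ : ℝ) (t : EuclideanSpace ℝ (Fin (n - 1))) (hφ : 0 < φ) : KSphere n
  | plane (h : ℝ) (hh : 0 < h) : KSphere n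

/-- The distance `d_K` between kissing spheres. -/
noncomputable def dK {n : ℕ} : KSphere n → KSphere n → ℝ
  | .sphere φ t _, .sphere φ' t' _ => ‖t - t'‖ / Real.sqrt (φ * φ')
  | .sphere φ _ _, .plane h _ => Real.sqrt (h / φ)
  | .plane h _, .sphere φ _ _ => Real.sqrt (h / φ)
  | .plane _ _, .plane _ _ => 0

/-! ### Light-cone coordinates of kissing spheres -/

namespace KSphere

variable {n : ℕ}

/-- First light-like coordinate of a kissing sphere: its inverse diameter, `0` for a plane. -/
noncomputable def kA : KSphere n → ℝ
  | .sphere φ _ _ => 1 / φ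
  | .plane _ _ => 0

/-- Second light-like coordinate of a kissing sphere: `‖t‖² / φ`, and the height for a plane. -/
noncomputable def kB : KSphere n → ℝ
  | .sphere φ t _ => ‖t‖ ^ 2 / φ
  | .plane h _ => h

/-- Space-like coordinates of a kissing sphere: `t / φ`, and `0` for a plane. -/
noncomputable def kW : KSphere n → EuclideanSpace ℝ (Fin (n - 1))
  | .sphere φ t _ => (1 / φ) • t
  | .plane _ _ => 0

theorem dK_sq (x y : KSphere n) :
    dK x y ^ 2 = kA x * kB y + kB x * kA y - 2 * inner ℝ (kW x) (kW y) := by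
  rcases x with ⟨φ, t, hφ⟩ | ⟨h, hh⟩ <;> rcases y with ⟨φ', t', hφ'⟩ | ⟨h', hh'⟩
  · simp only [dK, kA, kB, kW, inner_smul_left, inner_smul_right]
    rw [div_pow, Real.sq_sqrt (by positivity), norm_sub_sq_real]
    simp
    field_simp
    ring
  · simp only [dK, kA, kB, kW, inner_zero_right]
    rw [Real.sq_sqrt (by positivity)]
    ring
  · simp only [dK, kA, kB, kW, inner_zero_left]
    rw [Real.sq_sqrt (by positivity)]
    ring
  · simp [dK, kA, kB, kW]

theorem dK_self (x : KSphere n) : dK x x = 0 := by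
  cases x <;> simp [dK]

/-- Every future-directed light-like vector is the coordinate vector of a kissing sphere. The
coordinates `p, s, w` are those of the diagonal form `p² - s² - ‖w‖²`. -/
theorem exists_kSphere (p s : ℝ) (w : EuclideanSpace ℝ (Fin (n - 1))) (hp : 0 < p)
    (h : p ^ 2 = s ^ 2 + ‖w‖ ^ 2) :
    ∃ K : KSphere n, kA K = (p - s) / √2 ∧ kB K = (p + s) / √2 ∧ kW K = (1 / √2) • w := by
  have h2 : 0 < √(2 : ℝ) := by positivity
  have hsp : s ≤ p := (abs_le_of_sq_le_sq' (by nlinarith [sq_nonneg ‖w‖]) hp.le).2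
  rcases hsp.eq_or_lt with rfl | hlt
  · have hw : w = 0 := by
      have : ‖w‖ ^ 2 = 0 := by linarith
      simpa using this
    exact ⟨.plane ((s + s) / √2) (by positivity), by simp [kA], rfl, by simp [kW, hw]⟩
  · have hd : 0 < p - s := sub_pos.2 hlt
    refine ⟨.sphere (√2 / (p - s)) ((1 / (p - s)) • w) (by positivity), ?_, ?_, ?_⟩
    · simp [kA]
    · have hw : ‖w‖ ^ 2 = (p - s) * (p + s) := by linarith
      simp only [kB, norm_smul, mul_pow, hw]
      rw [Real.norm_of_nonneg (by positivity)]
      field_simp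
    · simp only [kW, smul_smul]
      congr 1
      field_simp

end KSphere

open KSphere

/-! ### The matrix of squared distances -/

theorem isHermitian_dK_sq {V : Type} {n : ℕ} (σ : V → KSphere n) :
    (Matrix.of fun u v => dK (σ u) (σ v) ^ 2).IsHermitian := by
  ext u v
  simp only [Matrix.conjTranspose_apply, Matrix.of_apply, dK_sq, star_trivial]
  rw [real_inner_comm]
  ring

/-- The matrix of squared distances factors through `ℝ^{2 + (n - 1)}`. -/
theorem rank_dK_sq {V : Type} [Fintype V] {n : ℕ} (hn : 2 ≤ n) (σ : V → KSphere n) :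
    (Matrix.of fun u v => dK (σ u) (σ v) ^ 2).rank ≤ n + 1 := by
  let A : Matrix V (Fin 2 ⊕ Fin (n - 1)) ℝ :=
    Matrix.of fun u => Sum.elim ![kA (σ u), kB (σ u)] fun k => kW (σ u) k
  let B : Matrix (Fin 2 ⊕ Fin (n - 1)) V ℝ :=
    Matrix.of fun k v => Sum.elim ![kB (σ v), kA (σ v)] (fun k => -2 * kW (σ v) k) k
  have hAB : (Matrix.of fun u v => dK (σ u) (σ v) ^ 2) = A * B := by
    ext u v
    simp only [Matrix.of_apply, Matrix.mul_apply, Fintype.sum_sum_type, A, B, dK_sq, Sum.elim_inl,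
      Sum.elim_inr, Fin.sum_univ_two, PiLp.inner_apply, Matrix.cons_val_zero, Matrix.cons_val_one]
    rw [sub_eq_add_neg, ← neg_mul, Finset.mul_sum]
    congr 1
    refine Finset.sum_congr rfl fun k _ => ?_
    simp
    ring
  rw [hAB]
  refine (Matrix.rank_mul_le_left A B).trans ((Matrix.rank_le_card_width A).trans ?_)
  simp
  omega

open Matrix in
/-- Two basis eigenvectors with positive eigenvalues span a plane on which the quadratic form is
positive definite; such a plane contains a nonzero vector of every hyperplane `a ⬝ᵥ z = 0`. -/
theorem eigenvalue_unique_of_nonpos {V : Type} [Fintype V] [DecidableEq V]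
    {D : Matrix V V ℝ} (hD : D.IsHermitian) (a : V → ℝ)
    (ha : ∀ z, a ⬝ᵥ z = 0 → z ⬝ᵥ (D *ᵥ z) ≤ 0) {i j : V}
    (hi : 0 < hD.eigenvalues i) (hj : 0 < hD.eigenvalues j) : i = j := by
  by_contra hij
  set x : V → ℝ := ⇑(hD.eigenvectorBasis i) with hx
  set y : V → ℝ := ⇑(hD.eigenvectorBasis j) with hy
  have orth : ∀ k l, (⇑(hD.eigenvectorBasis k) : V → ℝ) ⬝ᵥ ⇑(hD.eigenvectorBasis l)
      = if k = l then 1 else 0 := by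
    intro k l
    have := orthonormal_iff_ite.1 hD.eigenvectorBasis.orthonormal l k
    rw [EuclideanSpace.inner_eq_star_dotProduct] at this
    simpa [eq_comm] using this
  have key : ∀ c d : ℝ, (c • x + d • y) ⬝ᵥ (D *ᵥ (c • x + d • y))
      = hD.eigenvalues i * c ^ 2 + hD.eigenvalues j * d ^ 2 := by
    intro c d
    rw [mulVec_add, mulVec_smul, mulVec_smul, hx, hy, hD.mulVec_eigenvectorBasis,
      hD.mulVec_eigenvectorBasis]
    simp only [add_dotProduct, dotProduct_add, smul_dotProduct, dotProduct_smul, orth, hij,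
      Ne.symm hij, if_true, if_false, smul_eq_mul]
    ring
  by_cases hax : a ⬝ᵥ x = 0
  · have h1 := ha ((1 : ℝ) • x + (0 : ℝ) • y) (by simpa using hax)
    rw [key] at h1
    linarith
  · have h1 := ha ((-(a ⬝ᵥ y)) • x + (a ⬝ᵥ x) • y) (by
      simp only [dotProduct_add, dotProduct_smul, smul_eq_mul]; ring)
    rw [key] at h1
    have : 0 < (a ⬝ᵥ x) ^ 2 := by positivity
    nlinarith [sq_nonneg (-(a ⬝ᵥ y)), mul_pos hj this,
      mul_nonneg hi.le (sq_nonneg (-(a ⬝ᵥ y)))]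

open Matrix in
/-- On the hyperplane orthogonal to the vector of inverse diameters, only the nonpositive term
`-2 * ‖∑ u, z u • kW (σ u)‖ ^ 2` of the quadratic form is left. -/
theorem dK_sq_nonpos {V : Type} [Fintype V] {n : ℕ} (σ : V → KSphere n) (z : V → ℝ)
    (hz : (fun u => kA (σ u)) ⬝ᵥ z = 0) :
    z ⬝ᵥ ((Matrix.of fun u v => dK (σ u) (σ v) ^ 2) *ᵥ z) ≤ 0 := by
  have hz' : ∑ u, z u * kA (σ u) = 0 := by
    rw [← hz]; exact Finset.sum_congr rfl fun u _ => mul_comm _ _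
  have : z ⬝ᵥ ((Matrix.of fun u v => dK (σ u) (σ v) ^ 2) *ᵥ z)
      = (∑ u, z u * kA (σ u)) * (∑ u, z u * kB (σ u))
        + (∑ u, z u * kB (σ u)) * (∑ u, z u * kA (σ u))
        - 2 * inner ℝ (∑ u, z u • kW (σ u)) (∑ u, z u • kW (σ u)) := by
    rw [Finset.sum_mul_sum, Finset.sum_mul_sum]
    simp only [dotProduct, mulVec, Matrix.of_apply, sum_inner, inner_sum, inner_smul_left,
      inner_smul_right, Finset.mul_sum, dK_sq, ← Finset.sum_add_distrib,
      ← Finset.sum_sub_distrib]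
    refine Finset.sum_congr rfl fun u _ => Finset.sum_congr rfl fun v _ => ?_
    simp
    rw [real_inner_comm]
    ring
  rw [this, hz', real_inner_self_eq_norm_sq]
  nlinarith [sq_nonneg ‖∑ u, z u • kW (σ u)‖]

/-- The eigenvalues of a nonzero traceless matrix are not all nonpositive. -/
theorem exists_eigenvalue_pos {V : Type} [Fintype V] [DecidableEq V]
    {D : Matrix V V ℝ} (hD : D.IsHermitian) (h0 : ∀ u, D u u = 0)
    (hne : D ≠ 0) : ∃ i, 0 < hD.eigenvalues i := by
  by_contra! hle
  apply hne
  rw [← hD.eigenvalues_eq_zero_iff]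
  have hs : ∑ i, hD.eigenvalues i = 0 := by
    have := hD.trace_eq_sum_eigenvalues
    simp only [Matrix.trace, Matrix.diag_apply, h0, Finset.sum_const_zero] at this
    exact_mod_cast this.symm
  ext i
  exact (Finset.sum_eq_zero_iff_of_nonpos fun i _ => hle i).1 hs i (Finset.mem_univ i)

/-! ### From a target matrix to kissing spheres -/

/-- A symmetric matrix of rank at most `n + 1` with exactly one positive eigenvalue is a Gram matrix
in Minkowski space of signature `(1, n)`. -/
theorem exists_lorentz_gram {V : Type} [Fintype V] [DecidableEq V] {n : ℕ} (hn : 2 ≤ n)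
    {D : Matrix V V ℝ} (hD : D.IsHermitian)
    (hr : D.rank ≤ n + 1) (h1 : (Finset.univ.filter fun u => 0 < hD.eigenvalues u).card = 1) :
    ∃ (p s : V → ℝ) (w : V → EuclideanSpace ℝ (Fin (n - 1))),
      ∀ u v, D u v = p u * p v - s u * s v - inner ℝ (w u) (w v) := by
  obtain ⟨i₀, hi₀⟩ := Finset.card_eq_one.1 h1
  have hpos : ∀ i, 0 < hD.eigenvalues i ↔ i = i₀ := fun i => by
    simpa using Finset.ext_iff.1 hi₀ i
  have hcard : Fintype.card {i // hD.eigenvalues i < 0} ≤ Fintype.card (Option (Fin (n - 1))) := by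
    have hlt : Fintype.card {i // hD.eigenvalues i < 0} < D.rank := by
      rw [hD.rank_eq_card_non_zero_eigs]
      exact Fintype.card_lt_of_injective_of_notMem
        (fun i : {i // hD.eigenvalues i < 0} =>
          (⟨i.1, i.2.ne⟩ : {i // hD.eigenvalues i ≠ 0}))
        (fun i j hij => Subtype.ext (congrArg (fun k => k.1) hij))
        (b := ⟨i₀, ((hpos i₀).2 rfl).ne'⟩) (by
          rintro ⟨⟨i, hi⟩, h⟩
          have h' : i = i₀ := congrArg (fun k => k.1) h
          exact hi.not_gt ((hpos i).2 h'))
    simp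
    omega
  obtain ⟨f⟩ := Function.Embedding.nonempty_of_card_le hcard
  let x : V → V → ℝ := fun i u => hD.eigenvectorBasis i u
  have hspec : ∀ u v, D u v = ∑ i, hD.eigenvalues i * (x i u * x i v) := by
    intro u v
    conv_lhs => rw [hD.spectral_theorem]
    simp [Unitary.conjStarAlgAut_apply, Matrix.mul_apply, Matrix.diagonal_apply, x,
      Matrix.IsHermitian.eigenvectorUnitary_apply, Matrix.star_apply]
    exact Finset.sum_congr rfl fun i _ => by ring
  -- Coordinates along the negative eigenvectors, padded by zeros to dimension `n`.
  let q : V → Option (Fin (n - 1)) → ℝ := fun u =>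
    Function.extend f (fun i => √(-hD.eigenvalues i.1) * x i.1 u) 0
  have hq : ∀ u v, ∑ i : {i // hD.eigenvalues i < 0}, -hD.eigenvalues i.1 * (x i.1 u * x i.1 v)
      = ∑ k, q u k * q v k := by
    intro u v
    refine Fintype.sum_of_injective f f.injective _ _ ?_ ?_
    · intro k hk
      have : ¬ ∃ a, f a = k := hk
      simp [q, Function.extend_apply' _ _ _ this]
    · intro i
      simp only [q, f.injective.extend_apply]
      have := Real.mul_self_sqrt (neg_nonneg.2 i.2.le)
      linear_combination (-(x i.1 u * x i.1 v)) * this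
  refine ⟨fun u => √(hD.eigenvalues i₀) * x i₀ u, fun u => q u none,
    fun u => WithLp.toLp 2 fun k => q u (some k), fun u v => ?_⟩
  have hneg : ∑ i ∈ Finset.univ.erase i₀, hD.eigenvalues i * (x i u * x i v)
      = ∑ i : {i // hD.eigenvalues i < 0}, hD.eigenvalues i.1 * (x i.1 u * x i.1 v) := by
    rw [← Finset.sum_subtype (Finset.univ.filter fun i => hD.eigenvalues i < 0) (by simp)
      fun i => hD.eigenvalues i * (x i u * x i v)]
    symm
    refine Finset.sum_subset (fun i hi => ?_) fun i hi hi' => ?_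
    · rw [Finset.mem_filter] at hi
      refine Finset.mem_erase.2 ⟨fun h => ?_, Finset.mem_univ i⟩
      exact hi.2.not_gt ((hpos i).2 h)
    · have h₁ : ¬ 0 < hD.eigenvalues i := fun h => Finset.ne_of_mem_erase hi ((hpos i).1 h)
      have h₂ : ¬ hD.eigenvalues i < 0 := by simpa using hi'
      rw [le_antisymm (not_lt.1 h₁) (not_lt.1 h₂), zero_mul]
  have hinner : inner ℝ (WithLp.toLp 2 fun k => q u (some k) : EuclideanSpace ℝ (Fin (n - 1)))
      (WithLp.toLp 2 fun k => q v (some k)) = ∑ k, q u (some k) * q v (some k) := by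
    simp [PiLp.inner_apply, mul_comm]
  have h3 := hq u v
  rw [Fintype.sum_option] at h3
  simp only [neg_mul, Finset.sum_neg_distrib] at h3
  have hsq := Real.mul_self_sqrt ((hpos i₀).2 rfl).le
  rw [hspec, ← Finset.add_sum_erase _ _ (Finset.mem_univ i₀), hneg, hinner]
  linear_combination (-(x i₀ u * x i₀ v)) * hsq - h3

/-- Two light-like vectors with positive product have time coordinates of the same strict sign:
`p * p'` times the form is half of `‖p' • q - p • q'‖²`, where `q = (s, w)` and `q' = (s', w')`. -/
theorem mul_pos_of_lorentz_pos {E : Type*} [NormedAddCommGroup E] [InnerProductSpace ℝ E]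
    {p s p' s' : ℝ} {w w' : E} (h : p ^ 2 = s ^ 2 + ‖w‖ ^ 2) (h' : p' ^ 2 = s' ^ 2 + ‖w'‖ ^ 2)
    (hpos : 0 < p * p' - s * s' - inner ℝ w w') : 0 < p * p' := by
  have hnn : 0 ≤ p * p' * (p * p' - s * s' - inner ℝ w w') := by
    have h1 : ‖p' • w - p • w'‖ ^ 2
        = p' ^ 2 * ‖w‖ ^ 2 - 2 * (p * p') * inner ℝ w w' + p ^ 2 * ‖w'‖ ^ 2 := by
      rw [norm_sub_sq_real, inner_smul_left, inner_smul_right, norm_smul, norm_smul, mul_pow,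
        mul_pow, Real.norm_eq_abs, Real.norm_eq_abs, sq_abs, sq_abs]
      simp
      ring
    nlinarith [sq_nonneg ‖p' • w - p • w'‖, sq_nonneg (p' * s - p * s')]
  have hnn' : 0 ≤ p * p' := nonneg_of_mul_nonneg_left hnn hpos
  refine hnn'.lt_of_ne' fun h0 => ?_
  -- A light-like vector with `p = 0` vanishes.
  have aux : ∀ {p s : ℝ} {w : E}, p ^ 2 = s ^ 2 + ‖w‖ ^ 2 → p = 0 → s = 0 ∧ w = 0 := by
    rintro p s w h rfl
    have hs : s ^ 2 = 0 := by nlinarith [sq_nonneg s, sq_nonneg ‖w‖]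
    have hw : ‖w‖ ^ 2 = 0 := by nlinarith [sq_nonneg s, sq_nonneg ‖w‖]
    exact ⟨by simpa using hs, by simpa using hw⟩
  rcases mul_eq_zero.1 h0 with h0 | h0
  · obtain ⟨rfl, rfl⟩ := aux h h0
    simp [h0] at hpos
  · obtain ⟨rfl, rfl⟩ := aux h' h0
    simp [h0] at hpos

/-- `exists_kSphere` for a light-like vector of either time orientation, up to a sign `ε`;
nothing is claimed about the zero vector. -/
theorem exists_kSphere_sign {n : ℕ} (p s : ℝ) (w : EuclideanSpace ℝ (Fin (n - 1)))
    (h : p ^ 2 = s ^ 2 + ‖w‖ ^ 2) :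
    ∃ (K : KSphere n) (ε : ℝ), p ≠ 0 → ε ^ 2 = 1 ∧ 0 < ε * p ∧
      kA K = ε * (p - s) / √2 ∧ kB K = ε * (p + s) / √2 ∧ kW K = (ε / √2) • w := by
  rcases lt_trichotomy p 0 with hp | hp | hp
  · obtain ⟨K, hA, hB, hW⟩ := exists_kSphere (-p) (-s) (-w) (neg_pos.2 hp) (by simpa using h)
    refine ⟨K, -1, fun _ => ⟨by norm_num, by linarith, ?_, ?_, ?_⟩⟩
    · rw [hA]; ring
    · rw [hB]; ring
    · rw [hW, smul_neg, ← neg_smul]; congr 1; ring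
  · exact ⟨.plane 1 one_pos, 1, fun h => absurd hp h⟩
  · obtain ⟨K, hA, hB, hW⟩ := exists_kSphere p s w hp h
    exact ⟨K, 1, fun _ => ⟨by norm_num, by linarith, by rw [hA]; ring, by rw [hB]; ring, hW⟩⟩

/-- `(G, ℓ)` is completable in `(𝕂ⁿ, d_K)` iff there is a nonnegative
symmetric target matrix `D` with zero diagonal, agreeing with `ℓ²` on edges, of rank
at most `n + 1`, with exactly one positive eigenvalue. -/
theorem completable_iff_target_matrix {V : Type} [Fintype V] [DecidableEq V]
    (n : ℕ) (hn : 2 ≤ n) (G : SimpleGraph V) (hE : G.edgeSet.Nonempty)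
    (ℓ : Sym2 V → ℝ) (hℓ : ∀ e ∈ G.edgeSet, 0 < ℓ e) :
    (∃ σ : V → KSphere n, ∀ u v : V, G.Adj u v → dK (σ u) (σ v) = ℓ s(u, v)) ↔
      (∃ (D : Matrix V V ℝ) (hD : D.IsHermitian),
        (∀ u v, 0 ≤ D u v) ∧
        (∀ u, D u u = 0) ∧
        (∀ u v : V, G.Adj u v → D u v = (ℓ s(u, v)) ^ 2) ∧
        D.rank ≤ n + 1 ∧
        (Finset.univ.filter fun u => 0 < hD.eigenvalues u).card = 1) := by
  constructor
  · rintro ⟨σ, hσ⟩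
    have h0 : ∀ u, (Matrix.of fun u v => dK (σ u) (σ v) ^ 2) u u = 0 := fun u => by
      simp [dK_self]
    refine ⟨Matrix.of fun u v => dK (σ u) (σ v) ^ 2, isHermitian_dK_sq σ, fun u v => sq_nonneg _,
      h0, fun u v huv => by simp [hσ u v huv], rank_dK_sq hn σ, ?_⟩
    obtain ⟨i, hi⟩ := exists_eigenvalue_pos (isHermitian_dK_sq σ) h0 (by
      intro hzero
      obtain ⟨e, he⟩ := hE
      induction e with | _ u v =>
      have h1 : dK (σ u) (σ v) ^ 2 = 0 := congrFun (congrFun hzero u) v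
      rw [hσ u v he] at h1
      exact (pow_pos (hℓ _ he) 2).ne' h1)
    refine Finset.card_eq_one.2 ⟨i, ?_⟩
    ext j
    simp only [Finset.mem_filter, Finset.mem_univ, true_and, Finset.mem_singleton]
    exact ⟨fun hj => eigenvalue_unique_of_nonpos _ _ (dK_sq_nonpos σ) hj hi, fun h => h ▸ hi⟩
  · rintro ⟨D, hD, -, h0, hDℓ, hr, h1⟩
    obtain ⟨p, s, w, hg⟩ := exists_lorentz_gram hn hD hr h1
    have hlight : ∀ u, p u ^ 2 = s u ^ 2 + ‖w u‖ ^ 2 := fun u => by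
      have := hg u u
      rw [h0, real_inner_self_eq_norm_sq] at this
      linarith
    choose σ ε hσ using fun u => exists_kSphere_sign (p u) (s u) (w u) (hlight u)
    refine ⟨σ, fun u v huv => ?_⟩
    have hl : 0 < ℓ s(u, v) := hℓ _ huv
    have hD2 := hDℓ u v huv
    rw [hg] at hD2
    have hpp : 0 < p u * p v :=
      mul_pos_of_lorentz_pos (hlight u) (hlight v) (by rw [hD2]; positivity)
    obtain ⟨hu1, hu2, huA, huB, huW⟩ := hσ u (left_ne_zero_of_mul hpp.ne')
    obtain ⟨hv1, hv2, hvA, hvB, hvW⟩ := hσ v (right_ne_zero_of_mul hpp.ne')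
    have hεε : ε u * ε v = 1 := by
      have hpos : 0 < ε u * ε v := by
        refine pos_of_mul_pos_left (b := p u * p v) ?_ hpp.le
        nlinarith [mul_pos hu2 hv2]
      have : (ε u * ε v) ^ 2 = 1 := by rw [mul_pow, hu1, hv1, one_mul]
      nlinarith
    have hdnn : 0 ≤ dK (σ u) (σ v) := by
      cases σ u <;> cases σ v <;> simp only [dK] <;> positivity
    rw [← sq_eq_sq₀ hdnn hl.le, ← hD2, dK_sq, huA, huB, huW, hvA, hvB, hvW, inner_smul_left,
      inner_smul_right]
    have h2 : √(2 : ℝ) ^ 2 = 2 := Real.sq_sqrt (by norm_num)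
    have h2' : √(2 : ℝ) ≠ 0 := by positivity
    simp only [conj_trivial]
    field_simp
    rw [h2]
    linear_combination (2 * (p u * p v - s u * s v - inner ℝ (w u) (w v))) * hεε
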